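/- Let M and N be finite-dimensional left 𝕆-modules of types (m₁,m₂) and (n₁,n₂) respectively, where the type of a module X is (dim_ℝ 𝒜(X), dim_ℝ 𝒜⁻(X)). Then the real vector space Hom_𝕆(M,N) of left 𝕆-module homomorphisms from M to N is ℝ-linearly isomorphic to M_{n₁×m₁}(ℝ) ⊕ M_{n₂×m₂}(ℝ); in particular dim_ℝ Hom_𝕆(M,N) = n₁m₁ + n₂m₂. -/

import Mathlib

noncomputable section

open scoped Quaternion

/-- The octonions, realized as pairs of quaternions via the Cayley–Dickson construction. -/
def Octo : Type := ℍ[ℝ] × ℍ[ℝ]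

namespace Octo

instance : AddCommGroup Octo := inferInstanceAs (AddCommGroup (ℍ[ℝ] × ℍ[ℝ]))
instance : Module ℝ Octo := inferInstanceAs (Module ℝ (ℍ[ℝ] × ℍ[ℝ]))

/-- Build an octonion from a pair of quaternions. -/
def mk (a b : ℍ[ℝ]) : Octo := (a, b)

/-- First quaternion component. -/
def p1 (x : Octo) : ℍ[ℝ] := (show ℍ[ℝ] × ℍ[ℝ] from x).1

/-- Second quaternion component. -/
def p2 (x : Octo) : ℍ[ℝ] := (show ℍ[ℝ] × ℍ[ℝ] from x).2

/-- Cayley–Dickson multiplication: `(a,b)(c,d) = (ac − d̄b, da + bc̄)`. -/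
instance : Mul Octo :=
  ⟨fun x y => mk (p1 x * p1 y - star (p2 y) * p2 x) (p2 y * p1 x + p2 x * star (p1 y))⟩

instance : One Octo := ⟨mk 1 0⟩

/-- Octonion conjugation: for `x = (a,b)`, `x̄ = (ā, −b)`. -/
def conj (x : Octo) : Octo := mk (star (p1 x)) (-(p2 x))

/-- The octonion associator `[x,y,z] = (xy)z − x(yz)`. -/
def assoc (x y z : Octo) : Octo := x * y * z - x * (y * z)

/-- The octonion commutator `[x,y] = xy − yx`. -/
def comm (x y : Octo) : Octo := x * y - y * x

/-- The canonical embedding of the reals into the octonions. -/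
def ofReal (r : ℝ) : Octo := r • (1 : Octo)

end Octo

section OMod

variable {M : Type*} [AddCommGroup M] [Module ℝ M]
variable {N : Type*} [AddCommGroup N] [Module ℝ N]

/-- `IsOMod sm` says that the scalar multiplication `sm : 𝕆 × M → M` makes the real vector
space `M` a left 𝕆-module: `sm` is ℝ-bilinear, unital, and the left associator is
alternating in its two octonion arguments. -/
structure IsOMod (sm : Octo → M → M) : Prop where
  smul_add : ∀ (p : Octo) (m n : M), sm p (m + n) = sm p m + sm p n
  add_smul : ∀ (p q : Octo) (m : M), sm (p + q) m = sm p m + sm q m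
  real_smul : ∀ (r : ℝ) (p : Octo) (m : M), sm (r • p) m = r • sm p m
  smul_real : ∀ (r : ℝ) (p : Octo) (m : M), sm p (r • m) = r • sm p m
  one_smul : ∀ m : M, sm 1 m = m
  alt : ∀ (p q : Octo) (m : M),
    sm (p * q) m - sm p (sm q m) = -(sm (q * p) m - sm q (sm p m))

/-- The left associator `[p,q,m] = (pq)m − p(qm)`. -/
def oLassoc (sm : Octo → M → M) (p q : Octo) (m : M) : M :=
  sm (p * q) m - sm p (sm q m)

/-- The set `𝒜(M)` of associative elements: `[p,q,m] = 0` for all `p,q ∈ 𝕆`. -/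
def assocSet (sm : Octo → M → M) : Set M :=
  {m | ∀ p q : Octo, oLassoc sm p q m = 0}

/-- The set `𝒜⁻(M)` of conjugate associative elements: `(pq)m = q(pm)` for all `p,q ∈ 𝕆`. -/
def conjAssocSet (sm : Octo → M → M) : Set M :=
  {m | ∀ p q : Octo, sm (p * q) m = sm q (sm p m)}

/-- A homomorphism of left 𝕆-modules: an ℝ-linear map commuting with 𝕆-scalar
multiplication. -/
def IsOHom (sm : Octo → M → M) (sm' : Octo → N → N) (f : M → N) : Prop :=
  IsLinearMap ℝ f ∧ ∀ (p : Octo) (m : M), f (sm p m) = sm' p (f m)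

/-- Two left 𝕆-modules are isomorphic if there is a bijective homomorphism between them. -/
def OIso (sm : Octo → M → M) (sm' : Octo → N → N) : Prop :=
  ∃ f : M → N, IsOHom sm sm' f ∧ Function.Bijective f

/-- A submodule: a real subspace closed under 𝕆-scalar multiplication. -/
structure IsOSubmodule (sm : Octo → M → M) (S : Set M) : Prop where
  zero_mem : (0 : M) ∈ S
  add_mem : ∀ {x y : M}, x ∈ S → y ∈ S → x + y ∈ S
  smul_mem : ∀ (r : ℝ) {x : M}, x ∈ S → r • x ∈ S
  osmul_mem : ∀ (p : Octo) {x : M}, x ∈ S → sm p x ∈ S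

/-- `⟨m⟩_𝕆`, the smallest submodule containing `m`, as a set. -/
def genSet (sm : Octo → M → M) (m : M) : Set M :=
  ⋂₀ {S : Set M | IsOSubmodule sm S ∧ m ∈ S}

/-- An element `m` is cyclic if `⟨m⟩_𝕆 = 𝕆m`. -/
def IsOCyclic (sm : Octo → M → M) (m : M) : Prop :=
  genSet sm m = {x | ∃ p : Octo, x = sm p m}

/-- 𝕆-linear independence of a subset `S ⊆ M`: any finite 𝕆-linear combination of
distinct elements of `S` that vanishes has all coefficients zero. -/
def OLinIndep (sm : Octo → M → M) (S : Set M) : Prop :=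
  ∀ (n : ℕ) (s : Fin n → M) (r : Fin n → Octo), Function.Injective s → (∀ i, s i ∈ S) →
    (∑ i, sm (r i) (s i)) = 0 → ∀ i, r i = 0

end OMod

/-- The canonical left 𝕆-module structure on 𝕆 itself. -/
def oSmul : Octo → Octo → Octo := fun p x => p * x

/-- The left 𝕆-module structure `𝕆̄` on 𝕆: `p ·̂ x = p̄x`. -/
def oBarSmul : Octo → Octo → Octo := fun p x => Octo.conj p * x

theorem IsOMod.osmul_zero {N : Type*} [AddCommGroup N] [Module ℝ N]
    {sm : Octo → N → N} (h : IsOMod sm) (p : Octo) : sm p (0 : N) = 0 := by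
  have := h.smul_real 0 p 0
  simpa using this

/-- `Hom_𝕆(M,N)` as a real subspace of the ℝ-linear maps `M →ₗ[ℝ] N`. -/
def oHomSubmodule {M : Type*} [AddCommGroup M] [Module ℝ M]
    {N : Type*} [AddCommGroup N] [Module ℝ N]
    (sm : Octo → M → M) (sm' : Octo → N → N) (h' : IsOMod sm') :
    Submodule ℝ (M →ₗ[ℝ] N) where
  carrier := {f | ∀ (p : Octo) (m : M), f (sm p m) = sm' p (f m)}
  zero_mem' := by
    intro p m
    simp [h'.osmul_zero p]
  add_mem' := by
    intro f g hf hg p m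
    simp only [LinearMap.add_apply, hf p m, hg p m, (h'.smul_add p _ _).symm]
  smul_mem' := by
    intro c f hf p m
    simp only [LinearMap.smul_apply, hf p m, (h'.smul_real c p _).symm]

/-!
A left octonion module is a representation of the Clifford algebra of the imaginary octonions. For
each line `(a, b, c)` of the Fano plane the left multiplications by the corresponding units give an
involution `-L_c L_a L_b`, and four of the lines give commuting involutions, whose 16 joint
eigenspaces decompose the module. The common eigenspace for the eigenvalue `1` is `𝒜(M)`, the one
for `-1` is `𝒜⁻(M)`, and multiplications by the eight basis octonions move these two onto all the
others: up to a global sign, every sign pattern occurs. So `M` is spanned by `𝕆 𝒜(M)` and `𝕆 𝒜⁻(M)`,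
and a homomorphism amounts to a pair of real linear maps `𝒜(M) → 𝒜(N)` and `𝒜⁻(M) → 𝒜⁻(N)`.
Conjugating scalars exchanges the two kinds of elements, which reduces the second kind to the first.
-/

section JointEigenProj

variable {R : Type*} [Ring R]

theorem semiconjBy_mul_of_smul {x y t : R} {ε δ : ℤˣ} (hx : SemiconjBy x t (ε • t))
    (hy : SemiconjBy y t (δ • t)) : SemiconjBy (x * y) t ((ε * δ) • t) := by
  rw [mul_comm, mul_smul]
  exact (hx.smul_right δ).mul_left hy

theorem mul_mul_mul_self_of_anticommute {x y z : R} (hx : x * x = -1) (hy : y * y = -1)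
    (hz : z * z = -1) (hxy : y * x = -(x * y)) (hxz : x * z = -(z * x)) (hyz : y * z = -(z * y)) :
    z * x * y * (z * x * y) = 1 := by
  calc z * x * y * (z * x * y) = z * (x * (y * z)) * x * y := by simp only [mul_assoc]
    _ = z * z * x * (y * x) * y := by
      rw [hyz, mul_neg, ← mul_assoc x, hxz]
      noncomm_ring
    _ = z * z * (x * x) * (y * y) * -1 := by
      rw [hxy]
      noncomm_ring
    _ = 1 := by rw [hx, hy, hz]; noncomm_ring

variable (𝕜 : Type*) [Field 𝕜] [Algebra 𝕜 R]

/-- For an involution `t`, the idempotent `(1 + t) / 2` projecting onto its fixed vectors. -/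
def eigenProj (t : R) : R := (2⁻¹ : 𝕜) • (1 + t)

theorem mul_eigenProj_of_mul_self {t : R} (ht : t * t = 1) :
    t * eigenProj 𝕜 t = eigenProj 𝕜 t := by
  rw [eigenProj, mul_smul_comm, mul_add, mul_one, ht, add_comm]

theorem eigenProj_add_eigenProj_neg [NeZero (2 : 𝕜)] (t : R) :
    eigenProj 𝕜 t + eigenProj 𝕜 (-t) = 1 := by
  rw [eigenProj, eigenProj, ← smul_add, add_add_add_comm, add_neg_cancel, add_zero,
    ← two_smul 𝕜 (1 : R), inv_smul_smul₀ two_ne_zero]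

theorem semiconjBy_eigenProj {x t t' : R} (h : SemiconjBy x t t') :
    SemiconjBy x (eigenProj 𝕜 t) (eigenProj 𝕜 t') :=
  ((SemiconjBy.one_right x).add_right h).smul_right _

/-- For commuting involutions `t i`, the idempotent projecting onto their common fixed vectors. -/
def jointEigenProj {n : ℕ} (t : Fin n → R) : R := (List.ofFn fun i => eigenProj 𝕜 (t i)).prod

theorem jointEigenProj_succ {n : ℕ} (t : Fin (n + 1) → R) :
    jointEigenProj 𝕜 t = eigenProj 𝕜 (t 0) * jointEigenProj 𝕜 fun i => t i.succ := by
  simp only [jointEigenProj, List.ofFn_succ, List.prod_cons]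

theorem semiconjBy_jointEigenProj {n : ℕ} {x : R} {t t' : Fin n → R}
    (h : ∀ i, SemiconjBy x (t i) (t' i)) :
    SemiconjBy x (jointEigenProj 𝕜 t) (jointEigenProj 𝕜 t') := by
  induction n with
  | zero => simp only [jointEigenProj, List.ofFn_zero, List.prod_nil, SemiconjBy.one_right]
  | succ n ih =>
    rw [jointEigenProj_succ, jointEigenProj_succ]
    exact (semiconjBy_eigenProj 𝕜 (h 0)).mul_right (ih fun i => h i.succ)

variable {𝕜} in
theorem jointEigenProj_apply_of_forall_eq [NeZero (2 : 𝕜)] {M : Type*} [AddCommGroup M]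
    [Module 𝕜 M] {n : ℕ} {t : Fin n → Module.End 𝕜 M} {x : M} (hx : ∀ i, t i x = x) :
    jointEigenProj 𝕜 t x = x := by
  induction n with
  | zero => simp only [jointEigenProj, List.ofFn_zero, List.prod_nil, Module.End.one_apply]
  | succ n ih =>
    rw [jointEigenProj_succ, Module.End.mul_apply, ih fun i => hx i.succ, eigenProj,
      LinearMap.smul_apply, LinearMap.add_apply, Module.End.one_apply, hx 0,
      ← two_smul 𝕜 x, inv_smul_smul₀ two_ne_zero]

theorem mul_jointEigenProj {n : ℕ} {t : Fin n → R} (hsq : ∀ i, t i * t i = 1)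
    (hcomm : ∀ i j, Commute (t i) (t j)) (i : Fin n) :
    t i * jointEigenProj 𝕜 t = jointEigenProj 𝕜 t := by
  induction n with
  | zero => exact i.elim0
  | succ n ih =>
    rw [jointEigenProj_succ]
    cases i using Fin.cases with
    | zero => rw [← mul_assoc, mul_eigenProj_of_mul_self 𝕜 (hsq 0)]
    | succ i =>
      rw [← mul_assoc, (semiconjBy_eigenProj 𝕜 (hcomm i.succ 0)).eq, mul_assoc,
        ih (t := fun j => t j.succ) (fun j => hsq j.succ) fun j k => hcomm j.succ k.succ]

variable {𝕜} in
theorem jointEigenProj_apply_eq_zero [NeZero (2 : 𝕜)] {M : Type*} [AddCommGroup M] [Module 𝕜 M]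
    {n : ℕ} {t : Fin n → Module.End 𝕜 M} (hsq : ∀ i, t i * t i = 1)
    (hcomm : ∀ i j, Commute (t i) (t j)) {i : Fin n} {x : M} (hx : t i x = -x) :
    jointEigenProj 𝕜 t x = 0 := by
  have eq_neg : jointEigenProj 𝕜 t x = -jointEigenProj 𝕜 t x := calc
    jointEigenProj 𝕜 t x = (t i * jointEigenProj 𝕜 t) x := by rw [mul_jointEigenProj 𝕜 hsq hcomm]
    _ = (jointEigenProj 𝕜 t * t i) x := by rw [(semiconjBy_jointEigenProj 𝕜 (hcomm i)).eq]
    _ = -jointEigenProj 𝕜 t x := by rw [Module.End.mul_apply, hx, map_neg]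
  rw [eq_neg_iff_add_eq_zero, ← two_smul 𝕜] at eq_neg
  exact (smul_eq_zero_iff_right two_ne_zero).1 eq_neg

theorem sum_jointEigenProj_signs [NeZero (2 : 𝕜)] {n : ℕ} (t : Fin n → R) :
    ∑ s : Fin n → ℤˣ, jointEigenProj 𝕜 (fun i => s i • t i) = 1 := by
  induction n with
  | zero => simp [jointEigenProj]
  | succ n ih =>
    calc ∑ s : Fin (n + 1) → ℤˣ, jointEigenProj 𝕜 (fun i => s i • t i)
        = ∑ p : ℤˣ × (Fin n → ℤˣ),
            eigenProj 𝕜 (p.1 • t 0) * jointEigenProj 𝕜 (fun i => p.2 i • t i.succ) :=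
          ((Fin.consEquiv fun _ => ℤˣ).sum_comp _).symm.trans <|
            Finset.sum_congr rfl fun p _ => jointEigenProj_succ 𝕜 _
      _ = (∑ ε : ℤˣ, eigenProj 𝕜 (ε • t 0)) *
            ∑ s : Fin n → ℤˣ, jointEigenProj 𝕜 (fun i => s i • t i.succ) := by
          rw [Fintype.sum_prod_type, Finset.sum_mul_sum]
      _ = 1 := by
          rw [ih fun i => t i.succ, mul_one, UnitsInt.univ, Finset.sum_pair (by decide),
            _root_.one_smul, Units.neg_smul, _root_.one_smul, eigenProj_add_eigenProj_neg]

end JointEigenProj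

namespace Octo

@[ext]
theorem ext {x y : Octo} (h₁ : x.p1 = y.p1) (h₂ : x.p2 = y.p2) : x = y := Prod.ext h₁ h₂

@[simp] theorem p1_mk (a b : ℍ[ℝ]) : (mk a b).p1 = a := rfl
@[simp] theorem p2_mk (a b : ℍ[ℝ]) : (mk a b).p2 = b := rfl
@[simp] theorem p1_one : (1 : Octo).p1 = 1 := rfl
@[simp] theorem p2_one : (1 : Octo).p2 = 0 := rfl
@[simp] theorem p1_add (x y : Octo) : (x + y).p1 = x.p1 + y.p1 := rfl
@[simp] theorem p2_add (x y : Octo) : (x + y).p2 = x.p2 + y.p2 := rfl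
@[simp] theorem p1_neg (x : Octo) : (-x).p1 = -x.p1 := rfl
@[simp] theorem p2_neg (x : Octo) : (-x).p2 = -x.p2 := rfl
@[simp] theorem p1_sub (x y : Octo) : (x - y).p1 = x.p1 - y.p1 := rfl
@[simp] theorem p2_sub (x y : Octo) : (x - y).p2 = x.p2 - y.p2 := rfl
@[simp] theorem p1_smul (r : ℝ) (x : Octo) : (r • x).p1 = r • x.p1 := rfl
@[simp] theorem p2_smul (r : ℝ) (x : Octo) : (r • x).p2 = r • x.p2 := rfl
@[simp] theorem p1_mul (x y : Octo) : (x * y).p1 = x.p1 * y.p1 - star y.p2 * x.p2 := rfl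
@[simp] theorem p2_mul (x y : Octo) : (x * y).p2 = y.p2 * x.p1 + x.p2 * star y.p1 := rfl
@[simp] theorem p1_conj (x : Octo) : (conj x).p1 = star x.p1 := rfl
@[simp] theorem p2_conj (x : Octo) : (conj x).p2 = -x.p2 := rfl

theorem conj_add (x y : Octo) : conj (x + y) = conj x + conj y := by
  ext1 <;> simp [add_comm]

theorem conj_smul (r : ℝ) (x : Octo) : conj (r • x) = r • conj x := by
  ext1 <;> simp

theorem conj_one : conj 1 = 1 := by
  ext1 <;> simp

theorem conj_mul (x y : Octo) : conj (x * y) = conj y * conj x := by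
  ext1 <;> simp

theorem conj_conj (x : Octo) : conj (conj x) = x := by
  ext1 <;> simp

/-- The real part of an octonion. -/
def re (x : Octo) : ℝ := x.p1.re

theorem conj_eq_two_re_sub (x : Octo) : conj x = (2 * re x) • (1 : Octo) - x := by
  ext <;> simp [re, two_mul]

/-- The polarization of `x * x = (2 * re x) • x - (x̄x)`; the Euclidean inner product of `x` and `y`
is `re (x̄y)`. -/
theorem mul_add_mul_swap (x y : Octo) :
    x * y + y * x = (2 * re x) • y + (2 * re y) • x - (2 * re (conj x * y)) • (1 : Octo) := by
  ext <;> simp [re] <;> ring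

/-- The quaternion with the given coordinates. Unlike the anonymous constructor it has type `ℍ[ℝ]`
on the nose, which lets `simp` compute with the basis `e` below. -/
def quat (a b c d : ℝ) : ℍ[ℝ] := ⟨a, b, c, d⟩

@[simp] theorem re_quat (a b c d : ℝ) : (quat a b c d).re = a := rfl
@[simp] theorem imI_quat (a b c d : ℝ) : (quat a b c d).imI = b := rfl
@[simp] theorem imJ_quat (a b c d : ℝ) : (quat a b c d).imJ = c := rfl
@[simp] theorem imK_quat (a b c d : ℝ) : (quat a b c d).imK = d := rfl

/-- The standard orthonormal basis `1, i, j, k, ℓ, iℓ, jℓ, kℓ`, where `ℓ = (0, 1)`. -/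
def e : Fin 8 → Octo :=
  ![mk (quat 1 0 0 0) 0, mk (quat 0 1 0 0) 0, mk (quat 0 0 1 0) 0, mk (quat 0 0 0 1) 0,
    mk 0 (quat 1 0 0 0), mk 0 (quat 0 1 0 0), mk 0 (quat 0 0 1 0), mk 0 (quat 0 0 0 1)]

theorem mk_zero_eq (a : ℍ[ℝ]) :
    mk a 0 = a.re • e 0 + a.imI • e 1 + a.imJ • e 2 + a.imK • e 3 := by
  ext <;> simp [e]

theorem zero_mk_eq (a : ℍ[ℝ]) :
    mk 0 a = a.re • e 4 + a.imI • e 5 + a.imJ • e 6 + a.imK • e 7 := by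
  ext <;> simp [e]

theorem e_zero : e 0 = 1 := rfl

theorem conj_e_of_ne_zero {i : Fin 8} (hi : i ≠ 0) : conj (e i) = -e i := by
  fin_cases i <;> first | exact absurd rfl hi | (ext <;> simp [e])

theorem re_conj_e_mul_e (i j : Fin 8) : re (conj (e i) * e j) = if i = j then 1 else 0 := by
  fin_cases i <;> fin_cases j <;> simp [re, e]

theorem sum_re_conj_e_mul_smul_e (q : Octo) : ∑ i, re (conj (e i) * q) • e i = q := by
  ext <;> simp [Fin.sum_univ_eight, re, e]

/-- Four of the seven lines `(a, b, c)` of the Fano plane, oriented such that `e a * e b = e c`.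
They determine the module structure, since `e 1`, `e 2` and `e 4` generate the octonions. -/
def line : Fin 4 → Fin 8 × Fin 8 × Fin 8 := ![(1, 2, 3), (1, 4, 5), (2, 4, 6), (3, 4, 7)]

theorem e_mul_e_line (n : Fin 4) : e (line n).1 * e (line n).2.1 = e (line n).2.2 := by
  fin_cases n <;> ext <;> simp [e, line]

/-- The sign `±1` with which left multiplications by `e i` and `e j` commute. -/
def commSign (i j : Fin 8) : ℤˣ := if i = 0 ∨ j = 0 ∨ i = j then 1 else -1

theorem line_ne_zero_and_commSign_line (n : Fin 4) :
    ((line n).1 ≠ 0 ∧ (line n).2.1 ≠ 0 ∧ (line n).2.2 ≠ 0) ∧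
      commSign (line n).2.1 (line n).1 = -1 ∧ commSign (line n).1 (line n).2.2 = -1 ∧
        commSign (line n).2.1 (line n).2.2 = -1 := by
  decide +revert

/-- The sign `±1` with which left multiplication by `e i` commutes with the product of the three
left multiplications by the units on a line. -/
def lineSign (i : Fin 8) (n : Fin 4) : ℤˣ :=
  commSign i (line n).2.2 * commSign i (line n).1 * commSign i (line n).2.1

theorem lineSign_mul_line (m n : Fin 4) :
    lineSign (line n).2.2 m * lineSign (line n).1 m * lineSign (line n).2.1 m = 1 := by
  decide +revert

theorem exists_lineSign_eq_one (i : Fin 8) : ∃ n, lineSign i n = 1 := by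
  decide +revert

theorem exists_lineSign_eq_neg_one {i : Fin 8} (hi : i ≠ 0) : ∃ n, lineSign i n = -1 := by
  decide +revert

theorem exists_eq_mul_lineSign (s : Fin 4 → ℤˣ) : ∃ ε i, ∀ n, s n = ε * lineSign i n := by
  decide +revert

end Octo

namespace IsOMod

open Octo

variable {M : Type*} [AddCommGroup M] [Module ℝ M] {sm : Octo → M → M}

/-- The scalar multiplication `(p, m) ↦ p̄m` of the conjugate module. It exchanges associative and
conjugate associative elements. -/
def conjSmul (sm : Octo → M → M) (p : Octo) (m : M) : M := sm (conj p) m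

theorem conjugate (h : IsOMod sm) : IsOMod (conjSmul sm) where
  smul_add p := h.smul_add (conj p)
  add_smul p q m := by simp only [conjSmul, conj_add, h.add_smul]
  real_smul r p m := by simp only [conjSmul, conj_smul, h.real_smul]
  smul_real r p := h.smul_real r (conj p)
  one_smul m := by rw [conjSmul, conj_one, h.one_smul]
  alt p q m := by
    simp only [conjSmul, Octo.conj_mul]
    linear_combination (norm := module) h.alt (conj q) (conj p) m

variable (h : IsOMod sm)

/-- Left multiplication by octonions, as a linear map to the real endomorphisms of the module. -/
def lmul : Octo →ₗ[ℝ] Module.End ℝ M :=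
  LinearMap.mk₂ ℝ sm h.add_smul h.real_smul h.smul_add h.smul_real

theorem lmul_one : h.lmul 1 = 1 := LinearMap.ext h.one_smul

theorem lmul_mul_add_lmul_mul (p q : Octo) :
    h.lmul p * h.lmul q + h.lmul q * h.lmul p = h.lmul (p * q + q * p) := by
  ext m
  have halt := h.alt p q m
  rw [neg_sub, sub_eq_sub_iff_add_eq_add, ← h.add_smul, add_comm (sm q _)] at halt
  exact halt.symm

/-- The Clifford relation: `lmul` makes the module a representation of the Clifford algebra of the
imaginary octonions. -/
theorem lmul_conj_mul_add (p q : Octo) :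
    h.lmul (conj p) * h.lmul q + h.lmul (conj q) * h.lmul p
      = (2 * re (conj p * q)) • (1 : Module.End ℝ M) := by
  have jordan := h.lmul_mul_add_lmul_mul p q
  simp only [mul_add_mul_swap, map_sub, map_add, map_smul, lmul_one] at jordan
  simp only [conj_eq_two_re_sub, map_sub, map_smul, lmul_one, sub_mul, smul_mul_assoc, one_mul]
    at jordan ⊢
  linear_combination (norm := module) -jordan

theorem lmul_e_mul_self {i : Fin 8} (hi : i ≠ 0) : h.lmul (e i) * h.lmul (e i) = -1 := by
  have clifford := h.lmul_conj_mul_add (e i) (e i)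
  rw [conj_e_of_ne_zero hi, ← conj_e_of_ne_zero hi, re_conj_e_mul_e, if_pos rfl,
    conj_e_of_ne_zero hi, map_neg, neg_mul] at clifford
  linear_combination (norm := module) (-1 / 2 : ℝ) • clifford

theorem semiconjBy_lmul_e (i j : Fin 8) :
    SemiconjBy (h.lmul (e i)) (h.lmul (e j)) (commSign i j • h.lmul (e j)) := by
  unfold commSign
  split_ifs with hij
  · rw [_root_.one_smul]
    rcases hij with rfl | rfl | rfl
    · rw [e_zero, lmul_one]
      exact SemiconjBy.one_left _
    · rw [e_zero, lmul_one]
      exact SemiconjBy.one_right _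
    · exact Commute.refl _
  · obtain ⟨hi, hj, hij⟩ : i ≠ 0 ∧ j ≠ 0 ∧ i ≠ j := by simpa only [not_or] using hij
    have clifford := h.lmul_conj_mul_add (e i) (e j)
    rw [re_conj_e_mul_e, if_neg hij, conj_e_of_ne_zero hi, conj_e_of_ne_zero hj] at clifford
    simp only [map_neg, neg_mul, mul_zero, zero_smul] at clifford
    rw [SemiconjBy, Units.neg_smul, _root_.one_smul, neg_mul]
    linear_combination (norm := module) -clifford

/-- For the line `(a, b, c)` of index `n`, the involution `-L_c L_a L_b`, where `L_i` is left
multiplication by `e i`. As `L_c² = -1`, it fixes exactly the elements `x` such that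
`e_a (e_b x) = e_c x`, where `e_c = e_a e_b`. -/
def lineOp (n : Fin 4) : Module.End ℝ M :=
  -(h.lmul (e (line n).2.2) * h.lmul (e (line n).1) * h.lmul (e (line n).2.1))

theorem semiconjBy_lineOp (i : Fin 8) (n : Fin 4) :
    SemiconjBy (h.lmul (e i)) (h.lineOp n) (lineSign i n • h.lineOp n) := by
  have semiconj := ((h.semiconjBy_lmul_e i (line n).2.2).mul_right
    (h.semiconjBy_lmul_e i (line n).1)).mul_right (h.semiconjBy_lmul_e i (line n).2.1)
  rw [smul_mul_smul_comm, smul_mul_smul_comm, ← lineSign] at semiconj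
  rw [lineOp, smul_neg]
  exact semiconj.neg_right

theorem commute_lineOp (m n : Fin 4) : Commute (h.lineOp m) (h.lineOp n) := by
  have semiconj := semiconjBy_mul_of_smul (semiconjBy_mul_of_smul
    (h.semiconjBy_lineOp (line m).2.2 n) (h.semiconjBy_lineOp (line m).1 n))
    (h.semiconjBy_lineOp (line m).2.1 n)
  rw [lineSign_mul_line, _root_.one_smul] at semiconj
  exact semiconj.neg_left

theorem lmul_e_mul_lmul_e_of_commSign {i j : Fin 8} (hij : commSign i j = -1) :
    h.lmul (e i) * h.lmul (e j) = -(h.lmul (e j) * h.lmul (e i)) := by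
  rw [h.semiconjBy_lmul_e i j, hij, Units.neg_smul, _root_.one_smul, neg_mul]

theorem lineOp_mul_self (n : Fin 4) : h.lineOp n * h.lineOp n = 1 := by
  obtain ⟨⟨ha, hb, hc⟩, hba, hac, hbc⟩ := line_ne_zero_and_commSign_line n
  rw [lineOp, neg_mul_neg]
  exact mul_mul_mul_self_of_anticommute (h.lmul_e_mul_self ha) (h.lmul_e_mul_self hb)
    (h.lmul_e_mul_self hc) (h.lmul_e_mul_lmul_e_of_commSign hba)
    (h.lmul_e_mul_lmul_e_of_commSign hac) (h.lmul_e_mul_lmul_e_of_commSign hbc)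

theorem lmul_lmul_e_line_of_lineOp_eq {n : Fin 4} {x : M} (hx : h.lineOp n x = x) :
    h.lmul (e (line n).1) (h.lmul (e (line n).2.1) x) = h.lmul (e (line n).2.2) x := by
  have hc := h.lmul_e_mul_self (line_ne_zero_and_commSign_line n).1.2.2
  calc _ = -(h.lmul (e (line n).2.2) * h.lmul (e (line n).2.2)) (h.lmul (e (line n).1)
        (h.lmul (e (line n).2.1) x)) := by rw [hc, LinearMap.neg_apply, neg_neg]; rfl
    _ = h.lmul (e (line n).2.2) (h.lineOp n x) := by
      rw [lineOp, LinearMap.neg_apply, map_neg]; rfl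
    _ = h.lmul (e (line n).2.2) x := by rw [hx]

theorem lmul_conjugate (p : Octo) : h.conjugate.lmul p = h.lmul (conj p) := rfl

theorem lineOp_conjugate (n : Fin 4) : h.conjugate.lineOp n = -h.lineOp n := by
  obtain ⟨⟨ha, hb, hc⟩, -⟩ := line_ne_zero_and_commSign_line n
  simp only [lineOp, h.lmul_conjugate, conj_e_of_ne_zero ha, conj_e_of_ne_zero hb,
    conj_e_of_ne_zero hc, map_neg, neg_mul, mul_neg, neg_neg]

/-- The real subspace `𝒜(M)` of associative elements. -/
def assocSubmodule : Submodule ℝ M where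
  carrier := assocSet sm
  zero_mem' p q := by simp only [oLassoc, h.osmul_zero, sub_zero]
  add_mem' {a b} ha hb p q := by
    rw [oLassoc, h.smul_add, h.smul_add, h.smul_add, add_sub_add_comm]
    exact (congrArg₂ (· + ·) (ha p q) (hb p q)).trans (add_zero 0)
  smul_mem' r a ha p q := by
    rw [oLassoc, h.smul_real, h.smul_real, h.smul_real, ← smul_sub]
    exact (congrArg (r • ·) (ha p q)).trans (smul_zero r)

theorem mem_assocSubmodule {x : M} :
    x ∈ h.assocSubmodule ↔ ∀ p q, h.lmul p (h.lmul q x) = h.lmul (p * q) x :=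
  forall₂_congr fun _ _ => sub_eq_zero.trans eq_comm

theorem mem_assocSubmodule_conjugate {x : M} :
    x ∈ h.conjugate.assocSubmodule ↔ ∀ p q, h.lmul p (h.lmul q x) = h.lmul (q * p) x := by
  rw [h.conjugate.mem_assocSubmodule]
  refine ⟨fun hx p q => ?_, fun hx p q => ?_⟩
  · simpa only [h.lmul_conjugate, Octo.conj_mul, conj_conj] using hx (conj p) (conj q)
  · simpa only [h.lmul_conjugate, Octo.conj_mul] using hx (conj p) (conj q)

theorem mem_assocSubmodule_conjugate_conjugate {x : M} :
    x ∈ h.conjugate.conjugate.assocSubmodule ↔ x ∈ h.assocSubmodule := by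
  simp only [mem_assocSubmodule, h.lmul_conjugate, h.conjugate.lmul_conjugate, conj_conj]

theorem span_assocSet : Submodule.span ℝ (assocSet sm) = h.assocSubmodule :=
  Submodule.span_eq h.assocSubmodule

theorem span_conjAssocSet :
    Submodule.span ℝ (conjAssocSet sm) = h.conjugate.assocSubmodule := by
  have coe_eq : (h.conjugate.assocSubmodule : Set M) = conjAssocSet sm := by
    ext x
    rw [SetLike.mem_coe, h.mem_assocSubmodule_conjugate, forall_comm]
    exact forall₂_congr fun _ _ => eq_comm
  rw [← coe_eq, Submodule.span_eq]

theorem lmul_mk_zero_lmul_ell (a : ℍ[ℝ]) (y : M) : h.lmul (Octo.mk a 0) (h.lmul (Octo.mk 0 1) y)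
    = h.lmul (Octo.mk 0 1) (h.lmul (Octo.mk (star a) 0) y) := by
  have conj_mk : conj (Octo.mk (star a) 0) = Octo.mk a 0 := by ext1 <;> simp
  have conj_ell : conj (Octo.mk 0 1) = -Octo.mk 0 1 := by ext1 <;> simp
  have re_eq_zero : re (conj (Octo.mk (star a) 0) * Octo.mk 0 1) = 0 := by simp [re]
  have clifford := h.lmul_conj_mul_add (Octo.mk (star a) 0) (Octo.mk 0 1)
  rw [re_eq_zero, mul_zero, zero_smul, conj_mk, conj_ell, map_neg, neg_mul, add_neg_eq_zero]
    at clifford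
  exact congr($clifford y)

theorem lmul_ell_lmul_ell (y : M) : h.lmul (Octo.mk 0 1) (h.lmul (Octo.mk 0 1) y) = -y :=
  congr($(h.lmul_e_mul_self (i := 4) (by decide)) y)

theorem lmul_zero_mk_lmul_ell (b : ℍ[ℝ]) (y : M) : h.lmul (Octo.mk 0 b) (h.lmul (Octo.mk 0 1) y)
    = -h.lmul (Octo.mk 0 1) (h.lmul (Octo.mk 0 b) y) - (2 * b.re) • y := by
  have conj_mk (c : ℍ[ℝ]) : conj (Octo.mk 0 c) = -Octo.mk 0 c := by ext1 <;> simp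
  have re_eq : re (-Octo.mk 0 b * Octo.mk 0 1) = b.re := by simp [re]
  have clifford := congr($(h.lmul_conj_mul_add (Octo.mk 0 b) (Octo.mk 0 1)) y)
  simp only [conj_mk, re_eq, map_neg, neg_mul, LinearMap.add_apply, LinearMap.neg_apply,
    Module.End.mul_apply, LinearMap.smul_apply, Module.End.one_apply] at clifford
  linear_combination (norm := module) -clifford

theorem lmul_lmul_eq_swap {p q : Octo} {x : M} (hx : h.lmul p (h.lmul q x) = h.lmul (p * q) x) :
    h.lmul q (h.lmul p x) = h.lmul (q * p) x := by
  have jordan := congr($(h.lmul_mul_add_lmul_mul p q) x)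
  simp only [map_add, LinearMap.add_apply, Module.End.mul_apply, hx] at jordan
  exact add_left_cancel jordan

theorem mem_assocSubmodule_of_quaternion {x : M}
    (quat_assoc : ∀ a b,
      h.lmul (Octo.mk a 0) (h.lmul (Octo.mk b 0) x) = h.lmul (Octo.mk (a * b) 0) x)
    (ell_assoc : ∀ a, h.lmul (Octo.mk a 0) (h.lmul (Octo.mk 0 1) x) = h.lmul (Octo.mk 0 a) x) :
    x ∈ h.assocSubmodule := by
  have mk_zero_zero_mk (a b) :
      h.lmul (Octo.mk a 0) (h.lmul (Octo.mk 0 b) x) = h.lmul (Octo.mk 0 (b * a)) x := by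
    rw [← ell_assoc b, ← ell_assoc (b * a), h.lmul_mk_zero_lmul_ell b, h.lmul_mk_zero_lmul_ell a,
      quat_assoc, h.lmul_mk_zero_lmul_ell (b * a), star_mul]
  have zero_mk_mk_zero (a b) :
      h.lmul (Octo.mk 0 a) (h.lmul (Octo.mk b 0) x) = h.lmul (Octo.mk 0 (a * star b)) x := by
    have prod_eq : Octo.mk b 0 * Octo.mk 0 a = Octo.mk 0 (a * b) := by ext1 <;> simp
    have prod_eq' : Octo.mk 0 a * Octo.mk b 0 = Octo.mk 0 (a * star b) := by ext1 <;> simp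
    rw [← prod_eq']
    exact h.lmul_lmul_eq_swap (by rw [mk_zero_zero_mk, prod_eq])
  have zero_mk_zero_mk (a b) :
      h.lmul (Octo.mk 0 a) (h.lmul (Octo.mk 0 b) x) = -h.lmul (Octo.mk (star b * a) 0) x := by
    have two_re_smul_sub : Octo.mk (star b * a) 0
        = (2 * a.re) • Octo.mk (star b) 0 - Octo.mk (star b * star a) 0 := by
      ext <;> simp <;> ring
    calc h.lmul (Octo.mk 0 a) (h.lmul (Octo.mk 0 b) x)
        = h.lmul (Octo.mk 0 a) (h.lmul (Octo.mk 0 1) (h.lmul (Octo.mk (star b) 0) x)) := by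
          rw [← ell_assoc b, lmul_mk_zero_lmul_ell]
      _ = -h.lmul (Octo.mk 0 1) (h.lmul (Octo.mk (a * b) 0) (h.lmul (Octo.mk 0 1) x))
            - (2 * a.re) • h.lmul (Octo.mk (star b) 0) x := by
          rw [lmul_zero_mk_lmul_ell, zero_mk_mk_zero, star_star, ell_assoc]
      _ = h.lmul (Octo.mk (star b * star a) 0) x - (2 * a.re) • h.lmul (Octo.mk (star b) 0) x := by
          rw [lmul_mk_zero_lmul_ell, lmul_ell_lmul_ell, neg_neg, star_mul]
      _ = -h.lmul (Octo.mk (star b * a) 0) x := by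
          rw [two_re_smul_sub, map_sub, map_smul, LinearMap.sub_apply, LinearMap.smul_apply,
            neg_sub]
  have eq_add (p : Octo) : p = Octo.mk p.p1 0 + Octo.mk 0 p.p2 := by ext1 <;> simp
  refine h.mem_assocSubmodule.2 fun p q => ?_
  rw [eq_add p, eq_add q]
  generalize p.p1 = a, p.p2 = b, q.p1 = c, q.p2 = d
  have mul_eq : (Octo.mk a 0 + Octo.mk 0 b) * (Octo.mk c 0 + Octo.mk 0 d) =
      Octo.mk (a * c) 0 + Octo.mk 0 (d * a)
        + (Octo.mk 0 (b * star c) - Octo.mk (star d * b) 0) := by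
    ext1 <;> simp [sub_eq_add_neg]
  simp only [mul_eq, map_add, map_sub, LinearMap.add_apply, LinearMap.sub_apply, quat_assoc,
    mk_zero_zero_mk, zero_mk_mk_zero, zero_mk_zero_mk]
  abel

theorem lmul_mk_zero_lmul_mk_zero {x : M}
    (hx : h.lmul (e 1) (h.lmul (e 2) x) = h.lmul (e 3) x) (a b : ℍ[ℝ]) :
    h.lmul (Octo.mk a 0) (h.lmul (Octo.mk b 0) x) = h.lmul (Octo.mk (a * b) 0) x := by
  have neg_self {i : Fin 8} (hi : i ≠ 0) (y : M) : h.lmul (e i) (h.lmul (e i) y) = -y :=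
    congr($(h.lmul_e_mul_self hi) y)
  have swap {i j : Fin 8} (hij : commSign i j = -1) (y : M) :
      h.lmul (e i) (h.lmul (e j) y) = -h.lmul (e j) (h.lmul (e i) y) :=
    congr($(h.lmul_e_mul_lmul_e_of_commSign hij) y)
  have ji (y : M) := swap (show commSign 2 1 = -1 by decide) y
  have ik : h.lmul (e 1) (h.lmul (e 3) x) = -h.lmul (e 2) x := by
    rw [← hx, neg_self (by decide)]
  have jk : h.lmul (e 2) (h.lmul (e 3) x) = h.lmul (e 1) x := by
    rw [← hx, ji, neg_self (by decide), map_neg, neg_neg]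
  have ki : h.lmul (e 3) (h.lmul (e 1) x) = h.lmul (e 2) x := by
    rw [swap (by decide), ik, neg_neg]
  have kj : h.lmul (e 3) (h.lmul (e 2) x) = -h.lmul (e 1) x := by
    rw [swap (by decide), jk]
  simp only [mk_zero_eq, e_zero, lmul_one, map_add, map_smul, LinearMap.add_apply,
    LinearMap.smul_apply, Module.End.one_apply, Quaternion.re_mul, Quaternion.imI_mul,
    Quaternion.imJ_mul, Quaternion.imK_mul, hx, ji x, ik, jk, ki, kj,
    neg_self (show (1 : Fin 8) ≠ 0 by decide), neg_self (show (2 : Fin 8) ≠ 0 by decide),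
    neg_self (show (3 : Fin 8) ≠ 0 by decide)]
  module

theorem mem_assocSubmodule_of_lineOp_eq {x : M} (hx : ∀ n, h.lineOp n x = x) :
    x ∈ h.assocSubmodule := by
  have line_assoc (n) := h.lmul_lmul_e_line_of_lineOp_eq (hx n)
  refine h.mem_assocSubmodule_of_quaternion (h.lmul_mk_zero_lmul_mk_zero (line_assoc 0)) fun a => ?_
  have i_ell : h.lmul (e 1) (h.lmul (e 4) x) = h.lmul (e 5) x := line_assoc 1
  have j_ell : h.lmul (e 2) (h.lmul (e 4) x) = h.lmul (e 6) x := line_assoc 2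
  have k_ell : h.lmul (e 3) (h.lmul (e 4) x) = h.lmul (e 7) x := line_assoc 3
  have ell_eq : Octo.mk 0 1 = e 4 := rfl
  simp only [mk_zero_eq, zero_mk_eq, ell_eq, e_zero, lmul_one, map_add, map_smul,
    LinearMap.add_apply, LinearMap.smul_apply, Module.End.one_apply, i_ell, j_ell, k_ell]

theorem lineOp_apply_of_mem {a : M} (ha : a ∈ h.assocSubmodule) (n : Fin 4) :
    h.lineOp n a = a := by
  have hc := h.lmul_e_mul_self (line_ne_zero_and_commSign_line n).1.2.2
  calc h.lineOp n a = -h.lmul (e (line n).2.2) (h.lmul (e (line n).1 * e (line n).2.1) a) := by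
        rw [← h.mem_assocSubmodule.1 ha]; rfl
    _ = -(h.lmul (e (line n).2.2) * h.lmul (e (line n).2.2)) a := by rw [e_mul_e_line]; rfl
    _ = a := by rw [hc, LinearMap.neg_apply, neg_neg, Module.End.one_apply]

theorem lineOp_lmul_e (i : Fin 8) (n : Fin 4) (m : M) :
    h.lineOp n (h.lmul (e i) m) = lineSign i n • h.lmul (e i) (h.lineOp n m) := by
  rw [← Module.End.mul_apply (h.lmul (e i)), h.semiconjBy_lineOp i n, Module.End.mul_apply,
    LinearMap.smul_apply, smul_smul, Int.units_mul_self, _root_.one_smul]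

/-- The projection onto the subspace of associative elements, along the sum of the other joint
eigenspaces of the involutions `lineOp`. -/
def assocProj : M →ₗ[ℝ] h.assocSubmodule :=
  (jointEigenProj ℝ h.lineOp).codRestrict h.assocSubmodule fun m =>
    h.mem_assocSubmodule_of_lineOp_eq fun n =>
      congr($(mul_jointEigenProj ℝ h.lineOp_mul_self h.commute_lineOp n) m)

theorem assocProj_eq_zero {n : Fin 4} {m : M} (hm : h.lineOp n m = -m) : h.assocProj m = 0 :=
  Subtype.ext (jointEigenProj_apply_eq_zero h.lineOp_mul_self h.commute_lineOp hm)

theorem assocProj_of_mem (a : h.assocSubmodule) : h.assocProj a = a :=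
  Subtype.ext (jointEigenProj_apply_of_forall_eq (h.lineOp_apply_of_mem a.2))

theorem lmul_apply_eq_sum (q : Octo) (m : M) :
    h.lmul q m = ∑ i, re (conj (e i) * q) • h.lmul (e i) m := by
  conv_lhs => rw [← sum_re_conj_e_mul_smul_e q]
  simp only [map_sum, map_smul, LinearMap.sum_apply, LinearMap.smul_apply]

theorem assocProj_lmul_of_mem (q : Octo) (a : h.assocSubmodule) :
    h.assocProj (h.lmul q a) = re q • a := by
  have proj_eq_zero {i : Fin 8} (hi : i ≠ 0) : h.assocProj (h.lmul (e i) a) = 0 := by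
    obtain ⟨n, hn⟩ := exists_lineSign_eq_neg_one hi
    refine h.assocProj_eq_zero (n := n) ?_
    rw [lineOp_lmul_e, hn, h.lineOp_apply_of_mem a.2, Units.neg_smul, _root_.one_smul]
  have re_eq : re (conj (e 0) * q) = re q := by simp [re, e_zero]
  calc h.assocProj (h.lmul q a)
      = ∑ i, re (conj (e i) * q) • h.assocProj (h.lmul (e i) a) := by
        rw [lmul_apply_eq_sum, map_sum]
        simp only [map_smul]
    _ = re (conj (e 0) * q) • h.assocProj (h.lmul (e 0) a) :=
        Fintype.sum_eq_single 0 fun i hi => by rw [proj_eq_zero hi, smul_zero]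
    _ = re q • a := by rw [re_eq, e_zero, lmul_one, Module.End.one_apply, assocProj_of_mem]

theorem assocProj_lmul_of_mem_conjugate (q : Octo) (b : h.conjugate.assocSubmodule) :
    h.assocProj (h.lmul q b) = 0 := by
  have proj_eq_zero (i : Fin 8) : h.assocProj (h.lmul (e i) b) = 0 := by
    obtain ⟨n, hn⟩ := exists_lineSign_eq_one i
    have lineOp_eq : h.lineOp n b = -b := by
      rw [← neg_eq_iff_eq_neg, ← LinearMap.neg_apply, ← lineOp_conjugate]
      exact h.conjugate.lineOp_apply_of_mem b.2 n
    refine h.assocProj_eq_zero (n := n) ?_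
    rw [lineOp_lmul_e, hn, lineOp_eq, map_neg, _root_.one_smul]
  rw [lmul_apply_eq_sum, map_sum]
  exact Finset.sum_eq_zero fun i _ => by rw [map_smul, proj_eq_zero, smul_zero]

theorem lmul_e_lmul_conj_e (i : Fin 8) (m : M) : h.lmul (e i) (h.lmul (conj (e i)) m) = m := by
  by_cases hi : i = 0
  · rw [hi, e_zero, conj_one, lmul_one, Module.End.one_apply, Module.End.one_apply]
  · rw [conj_e_of_ne_zero hi, map_neg, LinearMap.neg_apply, map_neg, ← Module.End.mul_apply,
      h.lmul_e_mul_self hi, LinearMap.neg_apply, neg_neg, Module.End.one_apply]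

theorem exists_jointEigenProj_signs_eq (s : Fin 4 → ℤˣ) (m : M) :
    ∃ i x, (x ∈ h.assocSubmodule ∨ x ∈ h.conjugate.assocSubmodule) ∧
      jointEigenProj ℝ (fun n => s n • h.lineOp n) m = h.lmul (e i) x := by
  obtain ⟨ε, i, hs⟩ := exists_eq_mul_lineSign s
  have semiconj (n) : SemiconjBy (h.lmul (e i)) (ε • h.lineOp n) (s n • h.lineOp n) := by
    rw [hs, mul_smul]
    exact (h.semiconjBy_lineOp i n).smul_right ε
  have proj_eq : jointEigenProj ℝ (fun n => s n • h.lineOp n) m = h.lmul (e i)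
      (jointEigenProj ℝ (fun n => ε • h.lineOp n) (h.lmul (conj (e i)) m)) := by
    conv_lhs => rw [← h.lmul_e_lmul_conj_e i m]
    exact congr($(semiconjBy_jointEigenProj ℝ semiconj) _).symm
  refine ⟨i, _, ?_, proj_eq⟩
  rcases Int.units_eq_one_or ε with rfl | rfl
  · simp only [_root_.one_smul]
    exact .inl (h.assocProj (h.lmul (conj (e i)) m)).2
  · simp only [Units.neg_smul, _root_.one_smul, ← lineOp_conjugate]
    exact .inr (h.conjugate.assocProj (h.lmul (conj (e i)) m)).2

theorem linearMap_ext {X : Type*} [AddCommGroup X] [Module ℝ X] {f g : M →ₗ[ℝ] X}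
    (assoc : ∀ q (a : h.assocSubmodule), f (h.lmul q a) = g (h.lmul q a))
    (conj_assoc : ∀ q (b : h.conjugate.assocSubmodule), f (h.lmul q b) = g (h.lmul q b)) :
    f = g := by
  ext m
  rw [← Module.End.one_apply (R := ℝ) m, ← sum_jointEigenProj_signs ℝ h.lineOp,
    LinearMap.sum_apply, map_sum, map_sum]
  refine Finset.sum_congr rfl fun s _ => ?_
  obtain ⟨i, x, hx | hx, proj_eq⟩ := h.exists_jointEigenProj_signs_eq s m
  · rw [proj_eq, assoc _ ⟨x, hx⟩]
  · rw [proj_eq, conj_assoc _ ⟨x, hx⟩]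

variable {N : Type*} [AddCommGroup N] [Module ℝ N] {sm' : Octo → N → N} (h' : IsOMod sm')

/-- The extension of a real linear map between the subspaces of associative elements to an
`𝕆`-homomorphism vanishing on the conjugate associative elements. It is given by
`m ↦ ∑ i, e_i g(P(ē_i m))`, where `P` is `assocProj`. -/
def extendByZero (g : h.assocSubmodule →ₗ[ℝ] h'.assocSubmodule) : M →ₗ[ℝ] N :=
  ∑ i, h'.lmul (e i) ∘ₗ h'.assocSubmodule.subtype ∘ₗ g ∘ₗ h.assocProj ∘ₗ h.lmul (conj (e i))

variable (g : h.assocSubmodule →ₗ[ℝ] h'.assocSubmodule)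

theorem extendByZero_apply (m : M) :
    h.extendByZero h' g m = ∑ i, h'.lmul (e i) (g (h.assocProj (h.lmul (conj (e i)) m))) := by
  rw [extendByZero, LinearMap.sum_apply]
  rfl

theorem extendByZero_lmul_of_mem (q : Octo) (a : h.assocSubmodule) :
    h.extendByZero h' g (h.lmul q a) = h'.lmul q (g a) := by
  rw [extendByZero_apply, h'.lmul_apply_eq_sum q]
  refine Finset.sum_congr rfl fun i _ => ?_
  rw [h.mem_assocSubmodule.1 a.2, assocProj_lmul_of_mem, map_smul, Submodule.coe_smul, map_smul]

theorem extendByZero_lmul_of_mem_conjugate (q : Octo) (b : h.conjugate.assocSubmodule) :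
    h.extendByZero h' g (h.lmul q b) = 0 := by
  rw [extendByZero_apply]
  refine Finset.sum_eq_zero fun i _ => ?_
  rw [h.mem_assocSubmodule_conjugate.1 b.2, assocProj_lmul_of_mem_conjugate, map_zero,
    Submodule.coe_zero, map_zero]

theorem extendByZero_lmul (p : Octo) (m : M) :
    h.extendByZero h' g (h.lmul p m) = h'.lmul p (h.extendByZero h' g m) := by
  suffices comp_eq : h.extendByZero h' g ∘ₗ h.lmul p = h'.lmul p ∘ₗ h.extendByZero h' g from
    congr($comp_eq m)
  refine h.linearMap_ext (fun q a => ?_) fun q b => ?_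
  · rw [LinearMap.comp_apply, LinearMap.comp_apply, h.mem_assocSubmodule.1 a.2,
      extendByZero_lmul_of_mem, extendByZero_lmul_of_mem, h'.mem_assocSubmodule.1 (g a).2]
  · rw [LinearMap.comp_apply, LinearMap.comp_apply, h.mem_assocSubmodule_conjugate.1 b.2,
      extendByZero_lmul_of_mem_conjugate, extendByZero_lmul_of_mem_conjugate, map_zero]

theorem extendByZero_coe (a : h.assocSubmodule) : h.extendByZero h' g a = g a := by
  simpa only [lmul_one, Module.End.one_apply] using h.extendByZero_lmul_of_mem h' g 1 a

theorem extendByZero_coe_conjugate (b : h.conjugate.assocSubmodule) :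
    h.extendByZero h' g b = 0 := by
  simpa only [lmul_one, Module.End.one_apply] using h.extendByZero_lmul_of_mem_conjugate h' g 1 b

variable {h h'} in
theorem map_mem_assocSubmodule {f : M →ₗ[ℝ] N} (hf : ∀ p m, f (h.lmul p m) = h'.lmul p (f m))
    {a : M} (ha : a ∈ h.assocSubmodule) : f a ∈ h'.assocSubmodule :=
  h'.mem_assocSubmodule.2 fun p q => by rw [← hf, ← hf, h.mem_assocSubmodule.1 ha, hf]

variable {h'} in
theorem oHom_ext {f₁ f₂ : oHomSubmodule sm sm' h'}
    (assoc : ∀ a : h.assocSubmodule, f₁.1 a = f₂.1 a)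
    (conj_assoc : ∀ b : h.conjugate.assocSubmodule, f₁.1 b = f₂.1 b) : f₁ = f₂ :=
  Subtype.ext <| h.linearMap_ext
    (fun q a => (f₁.2 q a).trans <| .trans (by rw [assoc]) (f₂.2 q a).symm)
    (fun q b => (f₁.2 q b).trans <| .trans (by rw [conj_assoc]) (f₂.2 q b).symm)

variable (k : h.conjugate.assocSubmodule →ₗ[ℝ] h'.conjugate.assocSubmodule)

/-- The `𝕆`-homomorphism with prescribed restrictions to the subspaces of associative and of
conjugate associative elements. -/
def oHomOfRestrictions : oHomSubmodule sm sm' h' :=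
  ⟨h.extendByZero h' g + h.conjugate.extendByZero h'.conjugate k, fun p m => by
    have map_conj := h.conjugate.extendByZero_lmul h'.conjugate k (conj p) m
    rw [h.lmul_conjugate, h'.lmul_conjugate, conj_conj] at map_conj
    exact (congr($(h.extendByZero_lmul h' g p m) + $map_conj)).trans (map_add (h'.lmul p) _ _).symm⟩

theorem oHomOfRestrictions_coe (a : h.assocSubmodule) :
    (h.oHomOfRestrictions h' g k).1 a = g a := by
  have extendByZero_eq_zero : h.conjugate.extendByZero h'.conjugate k a = 0 :=
    h.conjugate.extendByZero_coe_conjugate h'.conjugate k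
      ⟨a, h.mem_assocSubmodule_conjugate_conjugate.2 a.2⟩
  rw [oHomOfRestrictions, LinearMap.add_apply, extendByZero_coe, extendByZero_eq_zero, add_zero]

theorem oHomOfRestrictions_coe_conjugate (b : h.conjugate.assocSubmodule) :
    (h.oHomOfRestrictions h' g k).1 b = k b := by
  rw [oHomOfRestrictions, LinearMap.add_apply, extendByZero_coe_conjugate, extendByZero_coe,
    zero_add]

/-- `𝕆`-homomorphisms correspond to pairs of real linear maps between the subspaces of associative
and of conjugate associative elements, by restriction. -/
def oHomEquiv : oHomSubmodule sm sm' h' ≃ₗ[ℝ] (h.assocSubmodule →ₗ[ℝ] h'.assocSubmodule) ×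
    (h.conjugate.assocSubmodule →ₗ[ℝ] h'.conjugate.assocSubmodule) where
  toFun f := (f.1.restrict fun _ => map_mem_assocSubmodule f.2,
    f.1.restrict fun _ => map_mem_assocSubmodule (h := h.conjugate) fun p => f.2 (conj p))
  map_add' _ _ := rfl
  map_smul' _ _ := rfl
  invFun gk := h.oHomOfRestrictions h' gk.1 gk.2
  left_inv _ := h.oHom_ext (h.oHomOfRestrictions_coe h' _ _)
    (h.oHomOfRestrictions_coe_conjugate h' _ _)
  right_inv gk := Prod.ext
    (LinearMap.ext fun a => Subtype.ext <| h.oHomOfRestrictions_coe h' gk.1 gk.2 a)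
    (LinearMap.ext fun b => Subtype.ext <| h.oHomOfRestrictions_coe_conjugate h' gk.1 gk.2 b)

end IsOMod

/-- For finite-dimensional left 𝕆-modules `M`, `N` of types `(m₁,m₂)` and
`(n₁,n₂)`, `Hom_𝕆(M,N) ≅ M_{n₁×m₁}(ℝ) ⊕ M_{n₂×m₂}(ℝ)` as real vector spaces; in particular
`dim_ℝ Hom_𝕆(M,N) = n₁m₁ + n₂m₂`. -/
theorem stmt13 {M : Type*} [AddCommGroup M] [Module ℝ M] [FiniteDimensional ℝ M]
    {N : Type*} [AddCommGroup N] [Module ℝ N] [FiniteDimensional ℝ N]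
    (sm : Octo → M → M) (sm' : Octo → N → N) (h : IsOMod sm) (h' : IsOMod sm')
    (m₁ m₂ n₁ n₂ : ℕ)
    (hm₁ : m₁ = Module.finrank ℝ (Submodule.span ℝ (assocSet sm)))
    (hm₂ : m₂ = Module.finrank ℝ (Submodule.span ℝ (conjAssocSet sm)))
    (hn₁ : n₁ = Module.finrank ℝ (Submodule.span ℝ (assocSet sm')))
    (hn₂ : n₂ = Module.finrank ℝ (Submodule.span ℝ (conjAssocSet sm'))) :
    Nonempty ((oHomSubmodule sm sm' h') ≃ₗ[ℝ]
        (Matrix (Fin n₁) (Fin m₁) ℝ × Matrix (Fin n₂) (Fin m₂) ℝ)) ∧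
      Module.finrank ℝ (oHomSubmodule sm sm' h') = n₁ * m₁ + n₂ * m₂ := by
  rw [h.span_assocSet] at hm₁
  rw [h.span_conjAssocSet] at hm₂
  rw [h'.span_assocSet] at hn₁
  rw [h'.span_conjAssocSet] at hn₂
  have homEquiv := (h.oHomEquiv h').trans <| LinearEquiv.prodCongr
    (LinearMap.toMatrix (Module.finBasisOfFinrankEq ℝ _ hm₁.symm)
      (Module.finBasisOfFinrankEq ℝ _ hn₁.symm))
    (LinearMap.toMatrix (Module.finBasisOfFinrankEq ℝ _ hm₂.symm)
      (Module.finBasisOfFinrankEq ℝ _ hn₂.symm))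
  refine ⟨⟨homEquiv⟩, ?_⟩
  rw [homEquiv.finrank_eq, Module.finrank_prod, Module.finrank_matrix, Module.finrank_matrix,
    Fintype.card_fin, Fintype.card_fin, Fintype.card_fin, Fintype.card_fin, Module.finrank_self,
    mul_one, mul_one]
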